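/- arXiv:2407.12596 — 4 statements merged into one kernel-verified Lean document; each statement's English description precedes it below -/
import Mathlib

section
/- Let n > 1 be odd, p a prime, and r ∈ ℕ_{≥1}. Then the number of tuples (c₁, …, cₙ) ∈ (ℤ/p^rℤ)ⁿ with [c₁, …, cₙ] = −Id equals p^{(n-3)(r-1)} · [(n-1)/2]_{p²}, where [m]_q := (q^m − 1)/(q − 1). -/
open Matrix

/-- `η(a)` is the matrix `![![a, -1], ![1, 0]]`. -/
def eta {R : Type*} [CommRing R] (a : R) : Matrix (Fin 2) (Fin 2) R := !![a, -1; 1, 0]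

/-- `[c₁, …, cₙ] = η(c₁)·η(c₂)⋯η(cₙ)`. -/
def prodEta {R : Type*} [CommRing R] {n : ℕ} (c : Fin n → R) : Matrix (Fin 2) (Fin 2) R :=
  (List.ofFn fun i => eta (c i)).prod


/-- The q-integer `[m]_q = 1 + q + ⋯ + q^(m-1) = (q^m - 1)/(q - 1)`. -/
def qInt (m q : ℕ) : ℕ := ∑ i ∈ Finset.range m, q ^ i

/-!
Write `Nₖ(x)` for the number of `c ∈ Rᵏ` whose continuant, the upper left entry of `[c₁, …, cₖ]`,
equals `x`. Since all determinants are `1`, a solution of `[c₁, …, cₙ] = -Id` is determined by its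
inner entries `c₂, …, cₙ₋₁`, and these are exactly the tuples of continuant `1`. So the solutions
number `Nₙ₋₂(1)`.

Let `R` be a finite local ring with maximal ideal `𝔪`, and let `k` be odd. Rescaling the entries of
`c` alternately by `u` and `u⁻¹` gives `Nₖ(u) = Nₖ(1)` for every unit `u`. Sorting the tuples of
length `k + 1` and `k + 2` by their first columns `(x, y)`, where `x` and `y` are never both in
`𝔪`, yields
* `|R|ᵏ⁺¹ = ∑ᵤ Nₖ₊₁(u) + |𝔪| |Rˣ| Nₖ(1)` and
* `Nₖ₊₂(1) = ∑ᵤ Nₖ₊₁(u) + |𝔪| |R| Nₖ(1)`,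

hence `Nₖ₊₂(1) = |R|ᵏ⁺¹ + |𝔪|² Nₖ(1)`, which `N₁(1) = 1` turns into a geometric sum.
-/

open IsLocalRing

section Entries

variable {R : Type*} [CommRing R] {k : ℕ}

lemma prodEta_succ (c : Fin (k + 1) → R) : prodEta c = eta (c 0) * prodEta (Fin.tail c) := by
  simp [prodEta, List.ofFn_succ, Fin.tail]

lemma prodEta_succ_zero_apply (c : Fin (k + 1) → R) (j : Fin 2) :
    prodEta c 0 j = c 0 * prodEta (Fin.tail c) 0 j - prodEta (Fin.tail c) 1 j := by
  simp [prodEta_succ, eta, Matrix.mul_apply, sub_eq_add_neg]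

lemma prodEta_succ_one_apply (c : Fin (k + 1) → R) (j : Fin 2) :
    prodEta c 1 j = prodEta (Fin.tail c) 0 j := by
  simp [prodEta_succ, eta, Matrix.mul_apply]

lemma det_prodEta (c : Fin k → R) : (prodEta c).det = 1 := by
  induction k with
  | zero => simp [prodEta]
  | succ k ih =>
    have heta : (eta (c 0)).det = 1 := by simp [eta]
    rw [prodEta_succ, Matrix.det_mul, heta, ih, one_mul]

lemma prodEta_eq_neg_one_iff (c : Fin (k + 1) → R) :
    prodEta c = -1 ↔ (prodEta (Fin.tail c) 0 0 = 0 ∧ prodEta (Fin.tail c) 1 0 = 1) ∧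
      c 0 = -prodEta (Fin.tail c) 1 1 := by
  have hdet := det_prodEta (Fin.tail c)
  rw [Matrix.det_fin_two] at hdet
  simp only [← Matrix.ext_iff, Fin.forall_fin_two, prodEta_succ_zero_apply, prodEta_succ_one_apply,
    Matrix.neg_apply, Matrix.one_apply_eq, Matrix.one_apply_ne zero_ne_one,
    Matrix.one_apply_ne one_ne_zero]
  constructor
  · rintro ⟨⟨h00, h01⟩, h10, h11⟩
    rw [h11] at h01
    rw [neg_zero] at h10
    rw [h10] at h00
    exact ⟨⟨h10, by linear_combination -h00⟩, by linear_combination -h01⟩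
  · rintro ⟨⟨h00, h10⟩, h0⟩
    rw [h00, h10] at hdet
    rw [h00, h10, h0]
    exact ⟨⟨by ring, by linear_combination prodEta (Fin.tail c) 1 1 * hdet⟩, by ring,
      by linear_combination -hdet⟩

end Entries

section Counting

variable {R : Type*} [CommRing R]

/-- The number of `k`-tuples `c` such that the matrix `[c₁, …, cₖ]` has first column `(x, y)`. -/
noncomputable def columnCount (k : ℕ) (x y : R) : ℕ :=
  Nat.card {c : Fin k → R // prodEta c 0 0 = x ∧ prodEta c 1 0 = y}

/-- The number `Nₖ(x)` of `k`-tuples `c` with continuant `x`, the continuant being encoded as the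
upper left entry of `[c₁, …, cₖ]`. -/
noncomputable def continuantCount (k : ℕ) (x : R) : ℕ :=
  Nat.card {c : Fin k → R // prodEta c 0 0 = x}

lemma columnCount_zero_mul_right (u : Rˣ) (x y : R) :
    columnCount 0 x (u * y) = columnCount 0 x y := by
  simp [columnCount, prodEta, eq_comm (a := (0 : R))]

lemma continuantCount_one (x : R) : continuantCount 1 x = 1 := by
  have hentry (c : Fin 1 → R) : prodEta c 0 0 = Equiv.funUnique (Fin 1) R c := by
    simp [prodEta, eta]
  rw [continuantCount, Nat.card_congr ((Equiv.funUnique (Fin 1) R).subtypeEquiv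
    (q := fun a ↦ a = x) fun c ↦ by rw [hentry]), Nat.card_unique]

lemma card_prodEta_eq_neg_one_eq_columnCount (k : ℕ) :
    Nat.card {c : Fin (k + 1) → R // prodEta c = -1} = columnCount k (0 : R) 1 := by
  refine Nat.card_eq_of_bijective
    (fun c ↦ ⟨Fin.tail c.1, ((prodEta_eq_neg_one_iff c.1).mp c.2).1⟩) ⟨?_, ?_⟩
  · rintro ⟨c, hc⟩ ⟨d, hd⟩ htail
    have htail : Fin.tail c = Fin.tail d := congrArg Subtype.val htail
    have hhead : c 0 = d 0 := by
      rw [((prodEta_eq_neg_one_iff c).mp hc).2, ((prodEta_eq_neg_one_iff d).mp hd).2, htail]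
    rw [Subtype.mk.injEq, ← Fin.cons_self_tail c, ← Fin.cons_self_tail d, htail, hhead]
  · rintro ⟨d, hd⟩
    exact ⟨⟨Fin.cons (-prodEta d 1 1) d, (prodEta_eq_neg_one_iff _).mpr (by simpa using hd)⟩,
      by simp⟩

section Sums

variable [Fintype R]

lemma columnCount_succ (k : ℕ) (x y : R) :
    columnCount (k + 1) x y = ∑ a : R, columnCount k y (a * y - x) := by
  simp only [columnCount, ← Nat.card_sigma]
  refine Nat.card_congr (((Fin.consEquiv fun _ ↦ R).symm.subtypeEquiv fun c ↦ ?_).trans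
    (Equiv.subtypeProdEquivSigmaSubtype fun a (d : Fin k → R) ↦
      prodEta d 0 0 = y ∧ prodEta d 1 0 = a * y - x))
  change _ ↔ prodEta (Fin.tail c) 0 0 = y ∧ prodEta (Fin.tail c) 1 0 = c 0 * y - x
  rw [prodEta_succ_zero_apply, prodEta_succ_one_apply, and_comm]
  refine and_congr_right ?_
  rintro rfl
  rw [sub_eq_iff_eq_add', eq_sub_iff_add_eq, eq_comm]

lemma sum_columnCount (k : ℕ) (x : R) : ∑ y : R, columnCount k x y = continuantCount k x := by
  simp only [columnCount, continuantCount, ← Nat.card_sigma]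
  exact Nat.card_congr ((Equiv.sigmaCongrRight fun y ↦
    (Equiv.subtypeSubtypeEquivSubtypeInter _ fun c ↦ prodEta c 1 0 = y).symm).trans
      (Equiv.sigmaFiberEquiv fun c : {c : Fin k → R // prodEta c 0 0 = x} ↦ prodEta c.1 1 0))

lemma sum_continuantCount (k : ℕ) : ∑ x : R, continuantCount k x = Nat.card R ^ k := by
  simp only [continuantCount, ← Nat.card_sigma]
  rw [Nat.card_congr (Equiv.sigmaFiberEquiv fun c : Fin k → R ↦ prodEta c 0 0), Nat.card_fun,
    Nat.card_fin]

end Sums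

variable [Finite R]

lemma columnCount_succ_of_isUnit (k : ℕ) (x : R) {y : R} (hy : IsUnit y) :
    columnCount (k + 1) x y = continuantCount k y := by
  cases nonempty_fintype R
  obtain ⟨u, rfl⟩ := hy
  rw [columnCount_succ, ← sum_columnCount]
  exact Equiv.sum_comp ((Units.mulRight u).trans (Equiv.subRight x)) (columnCount k (u : R))

lemma card_prodEta_eq_neg_one (k : ℕ) :
    Nat.card {c : Fin (k + 2) → R // prodEta c = -1} = continuantCount k (1 : R) := by
  rw [card_prodEta_eq_neg_one_eq_columnCount, columnCount_succ_of_isUnit k 0 isUnit_one]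

lemma columnCount_succ_mul_left {k : ℕ} {u : Rˣ}
    (h : ∀ x y : R, columnCount k x (u * y) = columnCount k x y) (x y : R) :
    columnCount (k + 1) (u * x) y = columnCount (k + 1) x y := by
  cases nonempty_fintype R
  simp only [columnCount_succ]
  refine (Fintype.sum_equiv (Units.mulLeft u) _ _ fun a ↦ ?_).symm
  rw [Units.mulLeft_apply, mul_assoc, ← mul_sub, h]

lemma columnCount_succ_mul_right {k : ℕ} {u : Rˣ}
    (h : ∀ x y : R, columnCount k (u * x) y = columnCount k x y) (x y : R) :
    columnCount (k + 1) x (u * y) = columnCount (k + 1) x y := by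
  cases nonempty_fintype R
  simp only [columnCount_succ]
  refine Fintype.sum_equiv (Units.mulRight u) _ _ fun a ↦ ?_
  rw [Units.mulRight_apply, h, mul_assoc]

lemma columnCount_mul_left_of_odd {k : ℕ} (hk : Odd k) (u : Rˣ) (x y : R) :
    columnCount k (u * x) y = columnCount k x y := by
  obtain ⟨j, rfl⟩ := hk
  induction j generalizing x y with
  | zero => exact columnCount_succ_mul_left (columnCount_zero_mul_right u) x y
  | succ j ih => exact columnCount_succ_mul_left (columnCount_succ_mul_right ih) x y

lemma continuantCount_eq_of_isUnit {k : ℕ} (hk : Odd k) {x : R} (hx : IsUnit x) :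
    continuantCount k x = continuantCount k (1 : R) := by
  cases nonempty_fintype R
  obtain ⟨u, rfl⟩ := hx
  simp only [← sum_columnCount]
  refine Finset.sum_congr rfl fun y _ ↦ ?_
  rw [← columnCount_mul_left_of_odd hk u 1 y, mul_one]

end Counting

section LocalRing

variable {R : Type*} [CommRing R] [IsLocalRing R]

lemma columnCount_eq_zero_of_mem_maximalIdeal (k : ℕ) {x y : R} (hx : x ∈ maximalIdeal R)
    (hy : y ∈ maximalIdeal R) : columnCount k x y = 0 := by
  have hempty : IsEmpty {c : Fin k → R // prodEta c 0 0 = x ∧ prodEta c 1 0 = y} := by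
    refine ⟨fun ⟨c, hc0, hc1⟩ ↦ (Ideal.ne_top_iff_one _).mp (maximalIdeal.isMaximal R).ne_top ?_⟩
    rw [← det_prodEta c, Matrix.det_fin_two, hc0, hc1]
    exact Ideal.sub_mem _ (Ideal.mul_mem_right _ _ hx) (Ideal.mul_mem_left _ _ hy)
  exact Nat.card_of_isEmpty

lemma isUnit_sub_of_mem_maximalIdeal {x y : R} (hx : x ∈ maximalIdeal R) (hy : IsUnit y) :
    IsUnit (x - y) := by
  rw [← notMem_maximalIdeal] at hy ⊢
  exact fun hxy ↦ hy (by simpa using Ideal.sub_mem _ hx hxy)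

variable (R) in
lemma card_eq_card_maximalIdeal_mul_card_residueField :
    Nat.card R = Nat.card (maximalIdeal R) * Nat.card (ResidueField R) := by
  rw [mul_comm]
  exact (maximalIdeal R).toAddSubgroup.card_eq_card_quotient_mul_card_addSubgroup

lemma sum_units_add_sum_maximalIdeal [Fintype R] [Fintype Rˣ] [Fintype (maximalIdeal R)]
    {M : Type*} [AddCommMonoid M] (f : R → M) :
    ∑ u : Rˣ, f u + ∑ x : maximalIdeal R, f x = ∑ x, f x := by
  have hbij : Function.Bijective (Sum.elim Units.val Subtype.val : Rˣ ⊕ maximalIdeal R → R) := by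
    refine ⟨Units.val_injective.sumElim Subtype.val_injective ?_, fun x ↦ ?_⟩
    · exact fun u x hux ↦ notMem_maximalIdeal.mpr u.isUnit (hux ▸ x.2)
    · by_cases hx : x ∈ maximalIdeal R
      · exact ⟨Sum.inr ⟨x, hx⟩, rfl⟩
      · exact ⟨Sum.inl (notMem_maximalIdeal.mp hx).unit, rfl⟩
  rw [← hbij.sum_comp, Fintype.sum_sum_type]
  rfl

variable [Finite R]

variable (R) in
lemma card_units_add_card_maximalIdeal :
    Nat.card Rˣ + Nat.card (maximalIdeal R) = Nat.card R := by
  classical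
  cases nonempty_fintype R
  simpa only [Finset.sum_const, Finset.card_univ, smul_eq_mul, mul_one, Nat.card_eq_fintype_card]
    using sum_units_add_sum_maximalIdeal fun _ : R ↦ (1 : ℕ)

lemma continuantCount_succ_of_mem_maximalIdeal {k : ℕ} (hk : Odd k) {x : R}
    (hx : x ∈ maximalIdeal R) :
    continuantCount (k + 1) x = Nat.card Rˣ * continuantCount k (1 : R) := by
  classical
  cases nonempty_fintype R
  have hunit (u : Rˣ) : columnCount (k + 1) x u = continuantCount k (1 : R) := by
    rw [columnCount_succ_of_isUnit k x u.isUnit, continuantCount_eq_of_isUnit hk u.isUnit]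
  have hmax (y : maximalIdeal R) : columnCount (k + 1) x y = 0 :=
    columnCount_eq_zero_of_mem_maximalIdeal (k + 1) hx y.2
  rw [← sum_columnCount, ← sum_units_add_sum_maximalIdeal]
  simp [hunit, hmax]

lemma columnCount_add_two_of_mem_maximalIdeal {k : ℕ} (hk : Odd k) {x y : R}
    (hx : IsUnit x) (hy : y ∈ maximalIdeal R) :
    columnCount (k + 2) x y = Nat.card R * continuantCount k (1 : R) := by
  cases nonempty_fintype R
  have hterm (a : R) : columnCount (k + 1) y (a * y - x) = continuantCount k (1 : R) := by
    have hu := isUnit_sub_of_mem_maximalIdeal (Ideal.mul_mem_left _ a hy) hx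
    rw [columnCount_succ_of_isUnit k y hu, continuantCount_eq_of_isUnit hk hu]
  rw [columnCount_succ]
  simp [hterm]

lemma continuantCount_add_two {k : ℕ} (hk : Odd k) :
    continuantCount (k + 2) (1 : R) =
      Nat.card R ^ (k + 1) + Nat.card (maximalIdeal R) ^ 2 * continuantCount k (1 : R) := by
  classical
  cases nonempty_fintype R
  have htotal : ∑ u : Rˣ, continuantCount (k + 1) (u : R) +
      Nat.card (maximalIdeal R) * (Nat.card Rˣ * continuantCount k (1 : R)) =
        Nat.card R ^ (k + 1) := by
    have hmax (x : maximalIdeal R) := continuantCount_succ_of_mem_maximalIdeal hk x.2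
    rw [← sum_continuantCount, ← sum_units_add_sum_maximalIdeal (R := R)]
    simp only [hmax, Finset.sum_const, Finset.card_univ, smul_eq_mul, Nat.card_eq_fintype_card]
  have hone : ∑ u : Rˣ, continuantCount (k + 1) (u : R) +
      Nat.card (maximalIdeal R) * (Nat.card R * continuantCount k (1 : R)) =
        continuantCount (k + 2) (1 : R) := by
    have hunit (u : Rˣ) := columnCount_succ_of_isUnit (k + 1) (1 : R) u.isUnit
    have hmax (y : maximalIdeal R) := columnCount_add_two_of_mem_maximalIdeal hk isUnit_one y.2
    rw [← sum_columnCount (k + 2), ← sum_units_add_sum_maximalIdeal (R := R)]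
    simp only [hunit, hmax, Finset.sum_const, Finset.card_univ, smul_eq_mul,
      Nat.card_eq_fintype_card]
  rw [← hone, ← htotal, ← card_units_add_card_maximalIdeal R]
  ring

variable (R) in
lemma continuantCount_two_mul_add_one (j : ℕ) :
    continuantCount (2 * j + 1) (1 : R) =
      Nat.card (maximalIdeal R) ^ (2 * j) * qInt (j + 1) (Nat.card (ResidueField R) ^ 2) := by
  induction j with
  | zero => simp [continuantCount_one, qInt]
  | succ j ih =>
    rw [mul_add_one, add_right_comm, continuantCount_add_two (odd_two_mul_add_one j), ih,
      card_eq_card_maximalIdeal_mul_card_residueField R, qInt, qInt,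
      Finset.sum_range_succ _ (j + 1)]
    ring

end LocalRing

theorem stmt2_general {R : Type*} [CommRing R] [IsLocalRing R] [Finite R] {n : ℕ} (hn : 1 < n)
    (hodd : Odd n) :
    Nat.card {c : Fin n → R // prodEta c = -1} =
      Nat.card (maximalIdeal R) ^ (n - 3) *
        qInt ((n - 1) / 2) (Nat.card (ResidueField R) ^ 2) := by
  obtain ⟨j, rfl⟩ : ∃ j, n = 2 * j + 1 + 2 := by
    obtain ⟨i, rfl⟩ := hodd
    exact ⟨i - 1, by omega⟩
  rw [card_prodEta_eq_neg_one, continuantCount_two_mul_add_one,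
    show 2 * j + 1 + 2 - 3 = 2 * j by omega, show (2 * j + 1 + 2 - 1) / 2 = j + 1 by omega]

section ZModPrimePow

variable {p r : ℕ}

lemma isLocalRing_zmod_prime_pow (hp : p.Prime) (hr : r ≠ 0) : IsLocalRing (ZMod (p ^ r)) := by
  have : Fact p.Prime := ⟨hp⟩
  have : Fact (1 < p ^ r) := ⟨Nat.one_lt_pow hr hp.one_lt⟩
  exact IsLocalRing.of_surjective' (PadicInt.toZModPow (p := p) r) (ZMod.ringHom_surjective _)

variable [IsLocalRing (ZMod (p ^ r))]

lemma card_maximalIdeal_zmod_prime_pow (hp : p.Prime) (hr : r ≠ 0) :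
    Nat.card (maximalIdeal (ZMod (p ^ r))) = p ^ (r - 1) := by
  have : NeZero (p ^ r) := ⟨pow_ne_zero _ hp.ne_zero⟩
  obtain ⟨s, rfl⟩ := Nat.exists_eq_succ_of_ne_zero hr
  have hcard := card_units_add_card_maximalIdeal (ZMod (p ^ (s + 1)))
  rw [Nat.card_eq_fintype_card, ZMod.card_units_eq_totient, Nat.totient_prime_pow_succ hp,
    Nat.card_zmod] at hcard
  have hpow : p ^ s * (p - 1) + p ^ s = p ^ (s + 1) := by
    rw [← Nat.mul_add_one, Nat.sub_add_cancel hp.one_le, pow_succ]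
  exact Nat.add_left_cancel (hcard.trans hpow.symm)

lemma card_residueField_zmod_prime_pow (hp : p.Prime) (hr : r ≠ 0) :
    Nat.card (ResidueField (ZMod (p ^ r))) = p := by
  have hcard := card_eq_card_maximalIdeal_mul_card_residueField (ZMod (p ^ r))
  rw [Nat.card_zmod, card_maximalIdeal_zmod_prime_pow hp hr] at hcard
  exact Nat.eq_of_mul_eq_mul_left (pow_pos hp.pos _) (hcard.symm.trans (pow_sub_one_mul hr p).symm)

end ZModPrimePow

/-- For odd `n > 1`, the number of tuples over `ℤ/p^rℤ` with
`[c₁, …, cₙ] = -Id` is `p^((n-3)(r-1)) · [(n-1)/2]_{p²}`. -/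
theorem stmt2 (p r : ℕ) (hp : p.Prime) (hr : 1 ≤ r) (n : ℕ) (hn : 1 < n) (hodd : Odd n) :
    Nat.card {c : Fin n → ZMod (p ^ r) // prodEta c = -1} =
      p ^ ((n - 3) * (r - 1)) * qInt ((n - 1) / 2) (p ^ 2) := by
  have hr0 : r ≠ 0 := Nat.one_le_iff_ne_zero.mp hr
  have := isLocalRing_zmod_prime_pow hp hr0
  have : NeZero (p ^ r) := ⟨pow_ne_zero _ hp.ne_zero⟩
  rw [stmt2_general hn hodd, card_maximalIdeal_zmod_prime_pow hp hr0,
    card_residueField_zmod_prime_pow hp hr0, ← pow_mul, mul_comm (r - 1)]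
end

section
/- Let R be a commutative ring and c, u, v, b, d ∈ R with v a unit of R. Set x := v⁻¹·((vb − 1)(uv − 1) − 1), and assume that x is also a unit of R. Then [c, u, v, b, d] = [c − (vb − 2)·x⁻¹, x, d − (uv − 2)·x⁻¹]. -/
open Matrix

/-!
A `2 × 2` matrix `A` of determinant one whose upper-left entry `x` is a unit is determined by `x`
and its two off-diagonal entries. It therefore factors as a lower transvection times `η(x)` times
an upper transvection, and these transvections can be absorbed into the outer factors `η(c)` and
`η(d)` of `η(c) * A * η(d)`. The theorem is the case `A = η(u) * η(v) * η(b)`, whose upper-left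
entry `u * v * b - u - b` equals `v⁻¹ * ((v * b - 1) * (u * v - 1) - 1)` when `v` is a unit.
-/

section

variable {R : Type*} [CommRing R]

theorem fin_two_eq_of_det_eq_of_isLeftRegular {A B : Matrix (Fin 2) (Fin 2) R}
    (hdet : A.det = B.det) (hreg : IsLeftRegular (A 0 0)) (h₀₀ : A 0 0 = B 0 0)
    (h₀₁ : A 0 1 = B 0 1) (h₁₀ : A 1 0 = B 1 0) : A = B := by
  have h₁₁ : A 1 1 = B 1 1 := by
    apply hreg
    rw [det_fin_two, det_fin_two, ← h₀₀, ← h₀₁, ← h₁₀] at hdet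
    exact sub_left_injective hdet
  rw [A.eta_fin_two, B.eta_fin_two, h₀₀, h₀₁, h₁₀, h₁₁]

theorem det_eta (a : R) : (eta a).det = 1 := by
  simp [eta]

theorem eta_mul_transvection (a s : R) : eta a * transvection 1 0 s = eta (a - s) := by
  ext i j
  fin_cases i <;> fin_cases j <;> simp [eta, transvection, mul_apply, sub_eq_add_neg]

theorem transvection_mul_eta (a t : R) : transvection 0 1 t * eta a = eta (a + t) := by
  ext i j
  fin_cases i <;> fin_cases j <;> simp [eta, transvection, mul_apply]

theorem transvection_mul_eta_mul_transvection (s x t : R) :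
    transvection 1 0 s * eta x * transvection 0 1 t =
      !![x, x * t - 1; s * x + 1, (s * x + 1) * t - s] := by
  ext i j
  fin_cases i <;> fin_cases j <;> simp [eta, transvection, mul_apply, sub_eq_add_neg]

theorem eq_transvection_mul_eta_mul_transvection {A : Matrix (Fin 2) (Fin 2) R} (hdet : A.det = 1)
    (hunit : IsUnit (A 0 0)) :
    A = transvection 1 0 ((A 1 0 - 1) * Ring.inverse (A 0 0)) * eta (A 0 0) *
      transvection 0 1 ((A 0 1 + 1) * Ring.inverse (A 0 0)) := by
  have hinv : A 0 0 * Ring.inverse (A 0 0) = 1 := Ring.mul_inverse_cancel _ hunit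
  refine fin_two_eq_of_det_eq_of_isLeftRegular ?_ hunit.isRegular.left ?_ ?_ ?_
  · simp [det_eta, hdet]
  all_goals rw [transvection_mul_eta_mul_transvection]
  · simp
  · simp only [of_apply, cons_val]
    linear_combination -(A 0 1 + 1) * hinv
  · simp only [of_apply, cons_val]
    linear_combination -(A 1 0 - 1) * hinv

theorem eta_mul_mul_eta_of_det_eq_one {A : Matrix (Fin 2) (Fin 2) R} (hdet : A.det = 1)
    (hunit : IsUnit (A 0 0)) (c d : R) :
    eta c * A * eta d =
      eta (c - (A 1 0 - 1) * Ring.inverse (A 0 0)) * eta (A 0 0) *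
        eta (d + (A 0 1 + 1) * Ring.inverse (A 0 0)) := by
  conv_lhs => rw [eq_transvection_mul_eta_mul_transvection hdet hunit]
  simp only [← eta_mul_transvection, ← transvection_mul_eta, mul_assoc]

theorem eta_mul_eta_mul_eta (u v b : R) :
    eta u * eta v * eta b = !![u * v * b - u - b, 1 - u * v; v * b - 1, -v] := by
  ext i j
  fin_cases i <;> fin_cases j <;> simp [eta] <;> ring

theorem prodEta_vecEmpty : prodEta (![] : Fin 0 → R) = 1 := by
  simp [prodEta]

theorem prodEta_vecCons {n : ℕ} (a : R) (c : Fin n → R) :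
    prodEta (vecCons a c) = eta a * prodEta c := by
  simp [prodEta, List.ofFn_succ]

theorem inverse_mul_sub_one_mul_sub_one_sub_one {v : R} (hv : IsUnit v) (u b : R) :
    Ring.inverse v * ((v * b - 1) * (u * v - 1) - 1) = u * v * b - u - b := by
  linear_combination (u * v * b - u - b) * Ring.inverse_mul_cancel v hv

theorem stmt5_general (c u v b d : R) (hx : IsUnit (u * v * b - u - b)) :
    prodEta ![c, u, v, b, d] =
      prodEta ![c - (v * b - 2) * Ring.inverse (u * v * b - u - b),
        u * v * b - u - b,
        d - (u * v - 2) * Ring.inverse (u * v * b - u - b)] := by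
  have hdet : (eta u * eta v * eta b).det = 1 := by simp only [det_mul, det_eta, mul_one]
  rw [eta_mul_eta_mul_eta] at hdet
  have hleft : v * b - 1 - 1 = v * b - 2 := by ring
  have hright (y : R) : d + (1 - u * v + 1) * y = d - (u * v - 2) * y := by ring
  calc prodEta ![c, u, v, b, d]
      = eta c * (eta u * eta v * eta b) * eta d := by
        simp only [prodEta_vecCons, prodEta_vecEmpty, mul_one, mul_assoc]
    _ = eta (c - (v * b - 1 - 1) * Ring.inverse (u * v * b - u - b)) * eta (u * v * b - u - b) *
          eta (d + (1 - u * v + 1) * Ring.inverse (u * v * b - u - b)) := by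
        rw [eta_mul_eta_mul_eta]
        exact eta_mul_mul_eta_of_det_eq_one hdet hx c d
    _ = prodEta ![c - (v * b - 2) * Ring.inverse (u * v * b - u - b),
          u * v * b - u - b,
          d - (u * v - 2) * Ring.inverse (u * v * b - u - b)] := by
        simp only [hleft, hright, prodEta_vecCons, prodEta_vecEmpty, mul_one, mul_assoc]

end

/-- If `v` is a unit and `x := v⁻¹·((vb-1)(uv-1)-1)` is a unit, then
`[c, u, v, b, d] = [c - (vb-2)x⁻¹, x, d - (uv-2)x⁻¹]`. -/
theorem stmt5 {R : Type*} [CommRing R] (c u v b d : R) (hv : IsUnit v)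
    (hx : IsUnit (Ring.inverse v * ((v * b - 1) * (u * v - 1) - 1))) :
    prodEta ![c, u, v, b, d] =
      prodEta ![c - (v * b - 2) * Ring.inverse (Ring.inverse v * ((v * b - 1) * (u * v - 1) - 1)),
        Ring.inverse v * ((v * b - 1) * (u * v - 1) - 1),
        d - (u * v - 2) * Ring.inverse (Ring.inverse v * ((v * b - 1) * (u * v - 1) - 1))] := by
  rw [inverse_mul_sub_one_mul_sub_one_sub_one hv] at hx ⊢
  exact stmt5_general c u v b d hx
end

section
/- Let R be a finite commutative local ring with maximal ideal I, let z ∈ R be a unit, and let n ≥ 2. If there exists a tuple (c₁, …, cₙ) ∈ Iⁿ with [c₁, …, cₙ] = λ_z, then n is even and z ∈ (-1)^{n/2} + I. -/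
open Matrix

/-! Modulo an ideal containing every `cᵢ`, the product `[c₁, …, cₙ]` becomes `η(0)ⁿ`. Since
`η(0)² = -1`, this power is the scalar matrix `(-1)^(n/2)` when `n` is even and an antidiagonal
matrix with unit entries when `n` is odd. Comparing with `λ_z` excludes odd `n` and determines
the residue of `z`. -/

section CommRing

variable {R S : Type*} [CommRing R] [CommRing S]

theorem mapMatrix_eta (f : R →+* S) (a : R) : f.mapMatrix (eta a) = eta (f a) := by
  ext i j
  fin_cases i <;> fin_cases j <;> simp [eta]

theorem mapMatrix_prodEta (f : R →+* S) {n : ℕ} (c : Fin n → R) :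
    f.mapMatrix (prodEta c) = prodEta (f ∘ c) := by
  simp only [prodEta, map_list_prod, List.map_ofFn, Function.comp_def, mapMatrix_eta]

theorem prodEta_const (n : ℕ) (a : R) : prodEta (fun _ : Fin n ↦ a) = eta a ^ n := by
  rw [prodEta, List.ofFn_const, List.prod_replicate]

theorem eta_zero_sq : eta (0 : R) ^ 2 = -1 := by
  simp [eta, sq, one_fin_two]

theorem eta_zero_pow_two_mul (k : ℕ) : eta (0 : R) ^ (2 * k) = !![(-1) ^ k, 0; 0, (-1) ^ k] := by
  rw [pow_mul, eta_zero_sq]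
  induction k with
  | zero => simp [one_fin_two]
  | succ k ih => simp [pow_succ, ih]

theorem eta_zero_pow_two_mul_add_one (k : ℕ) :
    eta (0 : R) ^ (2 * k + 1) = !![0, -(-1) ^ k; (-1) ^ k, 0] := by
  rw [pow_succ, eta_zero_pow_two_mul]
  simp [eta]

theorem even_of_eta_zero_pow_apply_one_zero_eq_zero [Nontrivial R] {n : ℕ}
    (h : (eta (0 : R) ^ n) 1 0 = 0) : Even n := by
  by_contra hn
  obtain ⟨k, rfl⟩ := Nat.not_even_iff_odd.mp hn
  have hk : (-1 : R) ^ k = 0 := by simpa [eta_zero_pow_two_mul_add_one] using h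
  exact (isUnit_one.neg.pow k).ne_zero hk

theorem eta_zero_pow_apply_zero_zero_of_even {n : ℕ} (hn : Even n) :
    (eta (0 : R) ^ n) 0 0 = (-1) ^ (n / 2) := by
  rw [← Nat.two_mul_div_two_of_even hn, eta_zero_pow_two_mul]
  simp

theorem mapMatrix_quotientMk_prodEta {I : Ideal R} {n : ℕ} {c : Fin n → R} (hc : ∀ i, c i ∈ I) :
    (Ideal.Quotient.mk I).mapMatrix (prodEta c) = eta 0 ^ n := by
  have hc_zero : Ideal.Quotient.mk I ∘ c = fun _ ↦ 0 :=
    funext fun i ↦ Ideal.Quotient.eq_zero_iff_mem.mpr (hc i)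
  rw [mapMatrix_prodEta, hc_zero, prodEta_const]

theorem stmt7_general {I : Ideal R} (hI : I ≠ ⊤) {z w : R} {n : ℕ} {c : Fin n → R}
    (hc : ∀ i, c i ∈ I) (h : prodEta c = !![z, 0; 0, w]) :
    Even n ∧ z - (-1) ^ (n / 2) ∈ I := by
  have : Nontrivial (R ⧸ I) := Ideal.Quotient.nontrivial_iff.mpr hI
  have hpow : eta (0 : R ⧸ I) ^ n = (Ideal.Quotient.mk I).mapMatrix !![z, 0; 0, w] := by
    rw [← h, mapMatrix_quotientMk_prodEta hc]
  have hn : Even n := even_of_eta_zero_pow_apply_one_zero_eq_zero (R := R ⧸ I) (by simp [hpow])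
  have hz : Ideal.Quotient.mk I z = (-1) ^ (n / 2) := by
    rw [← eta_zero_pow_apply_zero_zero_of_even hn, hpow]
    simp
  exact ⟨hn, Ideal.Quotient.eq.mp (by simpa using hz)⟩

end CommRing

/-- In a finite commutative local ring `R` with maximal ideal `I`, if `z` is
a unit, `n ≥ 2`, and some tuple in `Iⁿ` has `[c₁, …, cₙ] = λ_z = diag(z, z⁻¹)`, then `n` is
even and `z ∈ (-1)^(n/2) + I`. -/
theorem stmt7 {R : Type*} [CommRing R] [IsLocalRing R] [Finite R]
    (z : R) (hz : IsUnit z) (n : ℕ) (hn : 2 ≤ n) (c : Fin n → R)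
    (hc : ∀ i, c i ∈ IsLocalRing.maximalIdeal R)
    (h : prodEta c = !![z, 0; 0, Ring.inverse z]) :
    Even n ∧ z - (-1) ^ (n / 2) ∈ IsLocalRing.maximalIdeal R :=
  stmt7_general (Ideal.IsPrime.ne_top inferInstance) hc h
end

section
/- Let R be a finite commutative local ring with maximal ideal I, let ε ∈ {1, -1} ⊆ R, let z ∈ ε + I (so z is a unit), and let n > 3 be even. Then |σ_{z,n}| = Σ_{x ∈ −ε+I} |σ_{x,n−2}| · |{(u, v) ∈ I × I : uv − 1 = x·z⁻¹}|, where the sum runs over all x in the coset −ε + I (all such x are units). -/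
open Matrix

/-!
With `w = u v - 1`, the last two factors satisfy `η(v) η(u) = L · diag(w, w⁻¹) · U`, where `L` is
lower and `U` is upper unitriangular; `w` is a unit because `I` lies in the Jacobson radical. Moving
`U` across `λ_z` turns `[c₁, …, cₙ₋₂, v, u] = λ_z` into `U' [c₁, …, cₙ₋₂] L = λ_{z/w}` for another
upper unitriangular `U'`, and the outer factors are absorbed by shifting `c₁` and `cₙ₋₂` by elements
of `I`. Hence `σ_{z,n}` is the disjoint union over `(u, v) ∈ I × I` of copies of
`σ_{z/(uv-1),n-2}`. The involution `(u, v) ↦ (u/(uv-1), v)` of `I × I` inverts `uv - 1`, and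
collecting the pairs with `z (uv - 1) = x` gives the formula.
-/

section Matrices

variable {R : Type*} [CommRing R] {n : ℕ}

theorem isUnit_eta (a : R) : IsUnit (eta a) := by
  simp [Matrix.isUnit_iff_isUnit_det, eta, det_fin_two_of]

theorem eta_inv (a : R) : (eta a)⁻¹ = !![0, 1; -1, a] := by
  simp [eta, inv_def, det_fin_two_of, adjugate_fin_two_of]

theorem eta_add_eq_upper_mul (a s : R) : eta (a + s) = !![1, s; 0, 1] * eta a := by
  simp [eta]

theorem eta_add_eq_mul_lower (a t : R) : eta (a + t) = eta a * !![1, 0; -t, 1] := by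
  simp [eta]

theorem isUnit_upperUnitriangular (s : R) : IsUnit !![1, s; 0, 1] := by
  simp [Matrix.isUnit_iff_isUnit_det, det_fin_two_of]

theorem isUnit_lowerUnitriangular (t : R) : IsUnit !![1, 0; t, 1] := by
  simp [Matrix.isUnit_iff_isUnit_det, det_fin_two_of]

theorem prodEta_cons (a : R) (c : Fin n → R) :
    prodEta (Fin.cons a c : Fin (n + 1) → R) = eta a * prodEta c := by
  simp [prodEta, List.ofFn_succ]

theorem prodEta_snoc (c : Fin n → R) (a : R) :
    prodEta (Fin.snoc c a : Fin (n + 1) → R) = prodEta c * eta a := by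
  simp only [prodEta, List.ofFn_succ', List.concat_eq_append, List.prod_append,
    List.prod_singleton, Fin.snoc_castSucc, Fin.snoc_last]

theorem prodEta_add_single_zero (c : Fin (n + 1) → R) (s : R) :
    prodEta (c + Pi.single 0 s) = !![1, s; 0, 1] * prodEta c := by
  induction c using Fin.consCases with
  | _ a c =>
    have shift_head : (Fin.cons a c + Pi.single 0 s : Fin (n + 1) → R) = Fin.cons (a + s) c := by
      ext i
      cases i using Fin.cases <;> simp
    rw [shift_head, prodEta_cons, prodEta_cons, eta_add_eq_upper_mul, mul_assoc]

theorem prodEta_add_single_last (c : Fin (n + 1) → R) (t : R) :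
    prodEta (c + Pi.single (Fin.last n) t) = prodEta c * !![1, 0; -t, 1] := by
  induction c using Fin.snocCases with
  | _ c a =>
    have shift_last :
        (Fin.snoc c a + Pi.single (Fin.last n) t : Fin (n + 1) → R) = Fin.snoc c (a + t) := by
      ext i
      cases i using Fin.lastCases <;> simp
    rw [shift_last, prodEta_snoc, prodEta_snoc, eta_add_eq_mul_lower, mul_assoc]

/-- The matrix `λ_z = diag(z, z⁻¹)`; its lower right entry is `0` when `z` is not a unit. -/
noncomputable def diagInv (z : R) : Matrix (Fin 2) (Fin 2) R := !![z, 0; 0, Ring.inverse z]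

theorem upper_mul_diagInv_mul_eta_inv_mul_lower {u v z : R} (hz : IsUnit z)
    (hw : IsUnit (u * v - 1)) :
    !![1, -(z ^ 2 * v * Ring.inverse (u * v - 1)); 0, 1] *
        (diagInv z * (eta u)⁻¹ * (eta v)⁻¹) * !![1, 0; u * Ring.inverse (u * v - 1), 1] =
      diagInv (z * Ring.inverse (u * v - 1)) := by
  have inverse_quotient :
      Ring.inverse (z * Ring.inverse (u * v - 1)) = (u * v - 1) * Ring.inverse z := by
    rw [Ring.inverse_mul (.inl hz), Ring.inverse_inverse hw]
  have hzy := Ring.mul_inverse_cancel z hz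
  have hwt := Ring.mul_inverse_cancel _ hw
  rw [diagInv, diagInv, inverse_quotient, eta_inv, eta_inv]
  generalize Ring.inverse z = y at *
  generalize Ring.inverse (u * v - 1) = t at *
  simp only [mul_fin_two, EmbeddingLike.apply_eq_iff_eq, vecCons_inj, and_true]
  refine ⟨⟨?_, ?_⟩, ?_, ?_⟩
  · linear_combination z * u * v * t * (1 - (u * v - 1) * t) * hzy + z * (1 - u * v * t) * hwt
  · linear_combination -z * v * (u * v - 1) * t * hzy - z * v * hwt
  · linear_combination u * y * hwt
  · ring

end Matrices

section Solutions

variable {R : Type*} [CommRing R] {n : ℕ}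

/-- The solutions `c ∈ Iⁿ` of `[c₁, …, cₙ] = A`, so that `σ_{z,n}` is
`etaSolutions I (diagInv z) n`. Allowing any matrix `A` lets the entries be split off and shifted
one at a time. -/
def etaSolutions (I : Ideal R) (A : Matrix (Fin 2) (Fin 2) R) (n : ℕ) : Set (Fin n → R) :=
  {c | (∀ i, c i ∈ I) ∧ prodEta c = A}

variable {I : Ideal R} {A : Matrix (Fin 2) (Fin 2) R}

theorem snoc_mem_etaSolutions_iff {c : Fin n → R} {a : R} :
    (Fin.snoc c a : Fin (n + 1) → R) ∈ etaSolutions I A (n + 1) ↔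
      a ∈ I ∧ c ∈ etaSolutions I (A * (eta a)⁻¹) n := by
  have prodEta_eq_iff : prodEta c * eta a = A ↔ prodEta c = A * (eta a)⁻¹ := by
    rw [← (isUnit_eta a).mul_left_inj (b := prodEta c), mul_assoc, nonsing_inv_mul _
      ((isUnit_iff_isUnit_det _).1 (isUnit_eta a)), mul_one]
  simp only [etaSolutions, Set.mem_ofPred_eq, Fin.forall_fin_succ', Fin.snoc_castSucc,
    Fin.snoc_last, prodEta_snoc, prodEta_eq_iff]
  tauto

theorem forall_add_single_mem_iff {ι : Type*} [DecidableEq ι] {c : ι → R} {i : ι} {s : R}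
    (hs : s ∈ I) : (∀ j, (c + Pi.single i s : ι → R) j ∈ I) ↔ ∀ j, c j ∈ I :=
  add_mem_cancel_right (Ideal.single_mem_pi (I := fun _ => I) hs)

theorem add_single_zero_mem_etaSolutions_iff {c : Fin (n + 1) → R} {s : R} (hs : s ∈ I) :
    c + Pi.single 0 s ∈ etaSolutions I (!![1, s; 0, 1] * A) (n + 1) ↔
      c ∈ etaSolutions I A (n + 1) := by
  simp only [etaSolutions, Set.mem_ofPred_eq, forall_add_single_mem_iff hs,
    prodEta_add_single_zero, (isUnit_upperUnitriangular s).mul_right_inj]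

theorem add_single_last_mem_etaSolutions_iff {c : Fin (n + 1) → R} {t : R} (ht : t ∈ I) :
    c + Pi.single (Fin.last n) t ∈ etaSolutions I (A * !![1, 0; -t, 1]) (n + 1) ↔
      c ∈ etaSolutions I A (n + 1) := by
  simp only [etaSolutions, Set.mem_ofPred_eq, forall_add_single_mem_iff ht,
    prodEta_add_single_last, (isUnit_lowerUnitriangular (-t)).mul_left_inj]

variable (I A)

/-- Splits a solution into its last entry and the remaining ones. -/
def etaSolutionsSnocEquiv :
    etaSolutions I A (n + 1) ≃ Σ a : I, etaSolutions I (A * (eta (a : R))⁻¹) n where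
  toFun c :=
    have hc := snoc_mem_etaSolutions_iff.1 ((Fin.snoc_init_self c.1).symm ▸ c.2)
    ⟨⟨c.1 (Fin.last n), hc.1⟩, ⟨Fin.init c.1, hc.2⟩⟩
  invFun c := ⟨Fin.snoc c.2.1 c.1.1, snoc_mem_etaSolutions_iff.2 ⟨c.1.2, c.2.2⟩⟩
  left_inv c := by simp
  right_inv := by
    rintro ⟨⟨a, ha⟩, c, hc⟩
    ext <;> simp

variable {I}

/-- Shifts the first entry by `s` and the last entry by `t`; when `n = 0` these are the same entry
and both shifts apply to it. -/
def etaSolutionsShiftEquiv {s t : R} (hs : s ∈ I) (ht : t ∈ I) :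
    etaSolutions I A (n + 1) ≃ etaSolutions I (!![1, s; 0, 1] * A * !![1, 0; -t, 1]) (n + 1) :=
  ((Equiv.addRight (Pi.single 0 s)).trans (Equiv.addRight (Pi.single (Fin.last n) t))).subtypeEquiv
    fun _ => ((add_single_last_mem_etaSolutions_iff ht).trans
      (add_single_zero_mem_etaSolutions_iff hs)).symm

end Solutions

section Fibers

/-- Regroups a family pulled back along `f` by the values of `f`. -/
def sigmaCompEquivSigmaProdFiber {α β : Type*} (f : α → β) (S : β → Type*) :
    (Σ a, S (f a)) ≃ Σ b, S b × {a // f a = b} where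
  toFun q := ⟨f q.1, q.2, q.1, rfl⟩
  invFun q := ⟨q.2.2.1, cast (congrArg S q.2.2.2.symm) q.2.1⟩
  left_inv _ := rfl
  right_inv := by rintro ⟨_, _, _, rfl⟩; rfl

theorem natCard_sigma_subtype_prod {α : Type*} [Fintype α] (p : α → Prop) [DecidablePred p]
    (S T : α → Type*) [∀ a, Finite (S a)] [∀ a, Finite (T a)] :
    Nat.card (Σ a : {a // p a}, S a × T a) = ∑ a with p a, Nat.card (S a) * Nat.card (T a) := by
  simp only [Nat.card_sigma, Nat.card_prod]
  exact (Finset.sum_subtype _ (by simp) fun a => Nat.card (S a) * Nat.card (T a)).symm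

end Fibers

section Jacobson

variable {R : Type*} [CommRing R] {I : Ideal R}

theorem isUnit_of_sub_mem_jacobson_bot {ε z : R} (hε : IsUnit ε)
    (hz : z - ε ∈ Ideal.jacobson (⊥ : Ideal R)) : IsUnit z := by
  obtain ⟨ε, rfl⟩ := hε
  have factorization : z = ε * ((z - ε) * ↑ε⁻¹ + 1) := by
    linear_combination (ε - z) * ε.mul_inv
  rw [factorization]
  exact ε.isUnit.mul (Ideal.mem_jacobson_bot.1 hz _)

theorem isUnit_mul_sub_one_of_mem_jacobson_bot {u : R} (hu : u ∈ Ideal.jacobson (⊥ : Ideal R))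
    (v : R) : IsUnit (u * v - 1) :=
  isUnit_of_sub_mem_jacobson_bot isUnit_one.neg (by simpa using Ideal.mul_mem_right v _ hu)

theorem mul_inverse_mul_sub_one {u v : R} (hw : IsUnit (u * v - 1)) :
    u * Ring.inverse (u * v - 1) * v - 1 = Ring.inverse (u * v - 1) := by
  linear_combination Ring.mul_inverse_cancel _ hw

/-- The involution `(u, v) ↦ (u / (uv - 1), v)` of `I × I`, which inverts `uv - 1`. -/
noncomputable def pairInvolution (hI : I ≤ Ideal.jacobson ⊥) : Equiv.Perm (I × I) :=
  Function.Involutive.toPerm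
    (fun p => (⟨p.1 * Ring.inverse (p.1 * p.2 - 1 : R), I.mul_mem_right _ p.1.2⟩, p.2)) <| by
    rintro ⟨u, v⟩
    have hw := isUnit_mul_sub_one_of_mem_jacobson_bot (hI u.2) (v : R)
    simp only [Prod.mk.injEq, and_true, Subtype.ext_iff]
    rw [mul_inverse_mul_sub_one hw, Ring.inverse_inverse hw, Ring.inverse_mul_cancel_right _ _ hw]

theorem pairInvolution_mul_sub_one (hI : I ≤ Ideal.jacobson ⊥) (p : I × I) :
    ((pairInvolution hI p).1 : R) * (pairInvolution hI p).2 - 1 =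
      Ring.inverse ((p.1 : R) * p.2 - 1) :=
  mul_inverse_mul_sub_one (isUnit_mul_sub_one_of_mem_jacobson_bot (hI p.1.2) p.2)

/-- Removes the last two entries `v, u` of a solution in `σ_{z,n}`, compensating by shifts of the
first and the last of the remaining entries. -/
noncomputable def diagSolutionsEquivSigma (hI : I ≤ Ideal.jacobson ⊥) {z : R} (hz : IsUnit z)
    (n : ℕ) :
    etaSolutions I (diagInv z) (n + 3) ≃
      Σ p : I × I, etaSolutions I (diagInv (z * Ring.inverse ((p.1 : R) * p.2 - 1))) (n + 1) :=
  calc ↥(etaSolutions I (diagInv z) (n + 3))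
    _ ≃ Σ u : I, etaSolutions I (diagInv z * (eta (u : R))⁻¹) (n + 2) :=
      etaSolutionsSnocEquiv I _
    _ ≃ Σ u v : I, etaSolutions I (diagInv z * (eta (u : R))⁻¹ * (eta (v : R))⁻¹) (n + 1) :=
      Equiv.sigmaCongrRight fun _ => etaSolutionsSnocEquiv I _
    _ ≃ Σ p : I × I,
          etaSolutions I (diagInv z * (eta (p.1 : R))⁻¹ * (eta (p.2 : R))⁻¹) (n + 1) :=
      (Equiv.sigmaAssocProd (γ := fun u v : I =>
        etaSolutions I (diagInv z * (eta (u : R))⁻¹ * (eta (v : R))⁻¹) (n + 1))).symm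
    _ ≃ Σ p : I × I, etaSolutions I (diagInv (z * Ring.inverse ((p.1 : R) * p.2 - 1))) (n + 1) :=
      Equiv.sigmaCongrRight fun p =>
        (etaSolutionsShiftEquiv _
          (s := -(z ^ 2 * p.2 * Ring.inverse ((p.1 : R) * p.2 - 1)))
          (t := -(p.1 * Ring.inverse ((p.1 : R) * p.2 - 1)))
          (I.neg_mem <| I.mul_mem_right _ <| I.mul_mem_left _ p.2.2)
          (I.neg_mem <| I.mul_mem_right _ p.1.2)).trans <|
        Equiv.setCongr <| by
          rw [neg_neg, upper_mul_diagInv_mul_eta_inv_mul_lower hz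
            (isUnit_mul_sub_one_of_mem_jacobson_bot (hI p.1.2) p.2)]

theorem mul_mul_sub_one_add_mem {ε z v : R} (hz : z - ε ∈ I) (u : R) (hv : v ∈ I) :
    z * (u * v - 1) + ε ∈ I := by
  have expand : z * (u * v - 1) + ε = z * u * v - (z - ε) := by ring
  rw [expand]
  exact I.sub_mem (I.mul_mem_left _ hv) hz

/-- The pairs `(u, v) ∈ I × I` with `uv - 1 = t`, which weight the summands of the formula. -/
def mulSubOnePairs (I : Ideal R) (t : R) : Set (R × R) :=
  {uv | uv.1 ∈ I ∧ uv.2 ∈ I ∧ uv.1 * uv.2 - 1 = t}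

/-- Identifies the fiber over `x` of `(u, v) ↦ z (uv - 1)` on `I × I`, for `z` a unit. -/
def pairFiberEquiv {z : R} (hz : IsUnit z) (x : R) :
    {p : I × I // z * ((p.1 : R) * p.2 - 1) = x} ≃
      mulSubOnePairs I (x * Ring.inverse z) where
  toFun p := ⟨(p.1.1, p.1.2), p.1.1.2, p.1.2.2, by
    rw [Ring.eq_mul_inverse_iff_mul_eq _ _ _ hz, mul_comm, p.2]⟩
  invFun q := ⟨(⟨q.1.1, q.2.1⟩, ⟨q.1.2, q.2.2.1⟩), by
    rw [mul_comm, (Ring.eq_mul_inverse_iff_mul_eq _ _ _ hz).1 q.2.2.2]⟩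
  left_inv _ := rfl
  right_inv _ := rfl

end Jacobson

theorem stmt8_general {R : Type*} [CommRing R] {I : Ideal R} (hI : I ≤ Ideal.jacobson ⊥)
    {ε : R} (hε : IsUnit ε) {z : R} (hz : z - ε ∈ I) {n : ℕ} (hn : 3 ≤ n) :
    Nonempty (etaSolutions I (diagInv z) n ≃
      Σ x : {x : R // x + ε ∈ I}, etaSolutions I (diagInv x.1) (n - 2) ×
        mulSubOnePairs I (x.1 * Ring.inverse z)) := by
  obtain ⟨m, rfl⟩ := Nat.exists_eq_add_of_le' hn
  have hz_unit : IsUnit z := isUnit_of_sub_mem_jacobson_bot hε (hI hz)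
  let cosetOfPair (p : I × I) : {x : R // x + ε ∈ I} :=
    ⟨z * ((p.1 : R) * p.2 - 1), mul_mul_sub_one_add_mem hz p.1 p.2.2⟩
  exact ⟨calc ↥(etaSolutions I (diagInv z) (m + 3))
    _ ≃ Σ p : I × I, etaSolutions I (diagInv (z * Ring.inverse ((p.1 : R) * p.2 - 1))) (m + 1) :=
      diagSolutionsEquivSigma hI hz_unit m
    _ ≃ Σ p : I × I, etaSolutions I (diagInv (cosetOfPair p).1) (m + 1) :=
      (pairInvolution hI).sigmaCongr fun p => Equiv.setCongr <| by
        simp only [cosetOfPair, pairInvolution_mul_sub_one]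
    _ ≃ Σ x : {x : R // x + ε ∈ I},
          etaSolutions I (diagInv x.1) (m + 1) × {p // cosetOfPair p = x} :=
      sigmaCompEquivSigmaProdFiber cosetOfPair
        fun x => etaSolutions I (diagInv x.1) (m + 1)
    _ ≃ _ := Equiv.sigmaCongrRight fun x => (Equiv.refl _).prodCongr <|
      (Equiv.subtypeEquivRight fun _ => Subtype.ext_iff).trans (pairFiberEquiv hz_unit x.1)⟩

open scoped Classical in
/-- For a finite commutative local ring `R` with maximal ideal `I`,
`ε ∈ {1,-1}`, `z ∈ ε + I`, and even `n > 3`: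
`|σ_{z,n}| = Σ_{x ∈ -ε+I} |σ_{x,n-2}| · |{(u,v) ∈ I×I : uv - 1 = x·z⁻¹}|`. -/
theorem stmt8 {R : Type*} [CommRing R] [IsLocalRing R] [Fintype R]
    (ε : R) (hε : ε = 1 ∨ ε = -1) (z : R) (hz : z - ε ∈ IsLocalRing.maximalIdeal R)
    (n : ℕ) (hn : 3 < n) (hne : Even n) :
    Nat.card {c : Fin n → R // (∀ i, c i ∈ IsLocalRing.maximalIdeal R) ∧
        prodEta c = !![z, 0; 0, Ring.inverse z]} =
      ∑ x ∈ Finset.univ.filter (fun x : R => x + ε ∈ IsLocalRing.maximalIdeal R),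
        Nat.card {c : Fin (n - 2) → R // (∀ i, c i ∈ IsLocalRing.maximalIdeal R) ∧
            prodEta c = !![x, 0; 0, Ring.inverse x]} *
        Nat.card {uv : R × R // uv.1 ∈ IsLocalRing.maximalIdeal R ∧
            uv.2 ∈ IsLocalRing.maximalIdeal R ∧ uv.1 * uv.2 - 1 = x * Ring.inverse z} := by
  have hε_unit : IsUnit ε := by rcases hε with rfl | rfl <;> simp
  obtain ⟨e⟩ := stmt8_general (IsLocalRing.maximalIdeal_le_jacobson ⊥) hε_unit hz hn.le
  exact (Nat.card_congr e).trans <| natCard_sigma_subtype_prod _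
    (fun x => etaSolutions (IsLocalRing.maximalIdeal R) (diagInv x) (n - 2))
    fun x => mulSubOnePairs (IsLocalRing.maximalIdeal R) (x * Ring.inverse z)
end
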